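/- arXiv:1704.06950 — 4 statements merged into one kernel-verified Lean document; each statement's English description precedes it below -/
import Mathlib

section
/- A Lagrangian subspace L ⊆ S′ is complete if and only if both: (i) dim L = def(T₀), and (ii) there exists a GKN set t₁,…,t_m for T₀ (m = def(T₀)) such that L = {φx : x ∈ D(T₁), [x,tⱼ]_H = 0 for j = 1,…,m}. Moreover, in this case φ⁻¹(L) = {x ∈ D(T₁) : [x,tⱼ]_H = 0 for j = 1,…,m}. -/
open scoped ComplexInnerProductSpace

noncomputable section

variable {H : Type*} [NormedAddCommGroup H] [InnerProductSpace ℂ H] [CompleteSpace H]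

/-- The symplectic form `[x,y]_H = ⟪T₁x, y⟫_H - ⟪x, T₁y⟫_H` on the domain of `T₁`. -/
def sympForm (T₁ : H →ₗ.[ℂ] H) (x y : T₁.domain) : ℂ :=
  ⟪T₁ x, (y : H)⟫ - ⟪(x : H), T₁ y⟫

/-- The deficiency space `{x ∈ D(T₁) | T₁ x = c • x}`; `X₊ = defSpace T₁ I`,
`X₋ = defSpace T₁ (-I)`. -/
def defSpace (T₁ : H →ₗ.[ℂ] H) (c : ℂ) : Submodule ℂ T₁.domain :=
  LinearMap.ker (T₁.toFun - c • T₁.domain.subtype)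

/-- The deficiency index `def(T₀) := dim X₊`. -/
def defIndex (T₁ : H →ₗ.[ℂ] H) : ℕ :=
  Module.finrank ℂ (defSpace T₁ Complex.I)

/-- `D(T₀)` regarded as a submodule of `D(T₁)` (assuming `T₀ ≤ T₁`); the boundary
space is `S' := D(T₁) ⧸ D0 T₀ T₁` and `φ` is `Submodule.Quotient.mk`. -/
def D0 (T₀ T₁ : H →ₗ.[ℂ] H) : Submodule ℂ T₁.domain :=
  T₀.domain.comap T₁.domain.subtype

/-- A family `t₁, …, t_d ∈ D(T₁)` is a (partial) GKN family for `T₀` if it is linearly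
independent modulo `D(T₀)` and satisfies the symmetry conditions `[tᵢ,tⱼ]_H = 0`. -/
def IsGKNFamily (T₀ T₁ : H →ₗ.[ℂ] H) {d : ℕ} (t : Fin d → T₁.domain) : Prop :=
  (∀ α : Fin d → ℂ, ((∑ j, α j • t j : T₁.domain) : H) ∈ T₀.domain → ∀ j, α j = 0) ∧
  ∀ i j, sympForm T₁ (t i) (t j) = 0

/-- A subspace `L` of the boundary space `S' = D(T₁)/D(T₀)` is Lagrangian:
`[u : v]_{S'} = 0` for all `u, v ∈ L` (expressed via representatives). -/
def IsLagrangianRep (T₀ T₁ : H →ₗ.[ℂ] H) (L : Submodule ℂ (T₁.domain ⧸ D0 T₀ T₁)) : Prop :=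
  ∀ x y : T₁.domain, Submodule.Quotient.mk (p := D0 T₀ T₁) x ∈ L →
    Submodule.Quotient.mk (p := D0 T₀ T₁) y ∈ L → sympForm T₁ x y = 0

/-- A subspace `L ⊆ S'` is complete (as a Lagrangian): if `[u : v]_{S'} = 0` for all
`v ∈ L` then `u ∈ L` (expressed via representatives, `φ` being surjective). -/
def IsCompleteRep (T₀ T₁ : H →ₗ.[ℂ] H) (L : Submodule ℂ (T₁.domain ⧸ D0 T₀ T₁)) : Prop :=
  ∀ x : T₁.domain,
    (∀ y : T₁.domain, Submodule.Quotient.mk (p := D0 T₀ T₁) y ∈ L → sympForm T₁ x y = 0) →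
    Submodule.Quotient.mk (p := D0 T₀ T₁) x ∈ L

theorem sympForm_add_right (T₁ : H →ₗ.[ℂ] H) (x y z : T₁.domain) :
    sympForm T₁ x (y + z) = sympForm T₁ x y + sympForm T₁ x z := by
  simp only [sympForm, LinearPMap.map_add, Submodule.coe_add, inner_add_right]; ring

theorem sympForm_smul_right (T₁ : H →ₗ.[ℂ] H) (c : ℂ) (x y : T₁.domain) :
    sympForm T₁ x (c • y) = c * sympForm T₁ x y := by
  simp only [sympForm, LinearPMap.map_smul, Submodule.coe_smul, inner_smul_right]; ring

theorem sympForm_conj (T₁ : H →ₗ.[ℂ] H) (x y : T₁.domain) :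
    sympForm T₁ x y = - (starRingEnd ℂ) (sympForm T₁ y x) := by
  simp only [sympForm, map_sub, inner_conj_symm]; ring

theorem sympForm_symm_zero (T₁ : H →ₗ.[ℂ] H) {x y : T₁.domain} (h : sympForm T₁ x y = 0) :
    sympForm T₁ y x = 0 := by
  rw [sympForm_conj, h]; simp

/-- The form as a linear functional in its second argument. -/
def sympLin (T₁ : H →ₗ.[ℂ] H) (x : T₁.domain) : T₁.domain →ₗ[ℂ] ℂ where
  toFun y := sympForm T₁ x y
  map_add' := sympForm_add_right T₁ x
  map_smul' c y := sympForm_smul_right T₁ c x y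

theorem sympForm_sum_right (T₁ : H →ₗ.[ℂ] H) {d : ℕ} (x : T₁.domain) (t : Fin d → T₁.domain)
    (c : Fin d → ℂ) :
    sympForm T₁ x (∑ j, c j • t j) = ∑ j, c j * sympForm T₁ x (t j) := by
  have := map_sum (sympLin T₁ x) (fun j => c j • t j) Finset.univ
  refine this.trans (Finset.sum_congr rfl fun j _ => ?_)
  exact sympForm_smul_right T₁ _ _ _

theorem sympForm_D0 (T₀ T₁ : H →ₗ.[ℂ] H) (hdense : Dense (T₀.domain : Set H))
    (hT₁ : T₁ = T₀.adjoint) (hle : T₀ ≤ T₁) (x y : T₁.domain) (hy : y ∈ D0 T₀ T₁) :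
    sympForm T₁ x y = 0 := by
  have hf : T₁.IsFormalAdjoint T₀ := hT₁ ▸ LinearPMap.adjoint_isFormalAdjoint hdense
  have hy' : (y : H) ∈ T₀.domain := hy
  have h1 : T₀ ⟨y, hy'⟩ = T₁ y := hle.2 rfl
  have := hf x ⟨y, hy'⟩
  rw [h1] at this
  simp [sympForm, this]

theorem sympForm_nondeg (T₀ T₁ : H →ₗ.[ℂ] H) (hT₁adj : T₁.adjoint = T₀) (x : T₁.domain)
    (h : ∀ y, sympForm T₁ x y = 0) : x ∈ D0 T₀ T₁ := by
  change (x : H) ∈ T₀.domain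
  rw [← hT₁adj]
  exact LinearPMap.mem_adjoint_domain_of_exists _ ⟨T₁ x, fun y => sub_eq_zero.1 (h y)⟩

theorem mem_defSpace (T₁ : H →ₗ.[ℂ] H) (c : ℂ) (x : T₁.domain) :
    x ∈ defSpace T₁ c ↔ T₁ x = c • (x : H) := by
  simp only [defSpace, LinearMap.mem_ker, LinearMap.sub_apply, LinearMap.smul_apply, sub_eq_zero]
  rfl

theorem von_neumann (T₀ T₁ : H →ₗ.[ℂ] H)
    (hdense : Dense (T₀.domain : Set H)) (hclosed : T₀.IsClosed)
    (hT₁ : T₁ = T₀.adjoint) (hle : T₀ ≤ T₁) (x : T₁.domain) :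
    ∃ p ∈ defSpace T₁ Complex.I, ∃ q ∈ defSpace T₁ (-Complex.I), x - (p + q) ∈ D0 T₀ T₁ := by
  let K : Submodule ℂ (WithLp 2 (H × H)) :=
    T₀.graph.comap (WithLp.linearEquiv 2 ℂ (H × H)).toLinearMap
  have hK : IsClosed (K : Set (WithLp 2 (H × H))) :=
    IsClosed.preimage (WithLp.prod_continuous_ofLp 2 H H) hclosed
  have : CompleteSpace K := hK.completeSpace_coe
  obtain ⟨y, hy, z, hz, hyz⟩ := K.exists_add_mem_mem_orthogonal (WithLp.toLp 2 ((x : H), T₁ x))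
  have hy' : (WithLp.ofLp y) ∈ T₀.graph := hy
  rw [LinearPMap.mem_graph_iff] at hy'
  obtain ⟨w, hw1, hw2⟩ := hy'
  let w1 : T₁.domain := ⟨w, hle.1 w.2⟩
  have hw : T₀ w = T₁ w1 := hle.2 rfl
  have e1 : (x : H) = (w : H) + (WithLp.ofLp z).1 := by
    have := congrArg (fun v => (WithLp.ofLp v).1) hyz
    simpa [hw1] using this
  have e2 : T₁ x = T₁ w1 + (WithLp.ofLp z).2 := by
    have := congrArg (fun v => (WithLp.ofLp v).2) hyz
    rw [← hw, hw2]
    simpa using this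
  let z1 : T₁.domain := x - w1
  have hz1 : (z1 : H) = (WithLp.ofLp z).1 := by
    change (x : H) - (w : H) = _
    rw [e1]; abel
  have hz2 : T₁ z1 = (WithLp.ofLp z).2 := by
    rw [LinearPMap.map_sub, e2]; abel
  have horth : ∀ u : T₀.domain, ⟪-(z1 : H), (u : H)⟫ = ⟪T₁ z1, T₀ u⟫ := by
    intro u
    have hu : (WithLp.toLp 2 ((u : H), T₀ u)) ∈ K := T₀.mem_graph u
    have := (K.mem_orthogonal' z).1 hz _ hu
    rw [WithLp.prod_inner_apply] at this
    simp only [← hz1, ← hz2] at this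
    rw [inner_neg_left]
    linear_combination (-1 : ℂ) * this
  have hmem : T₁ z1 ∈ T₁.domain := by
    have := LinearPMap.mem_adjoint_domain_of_exists (T := T₀) (T₁ z1) ⟨_, horth⟩
    rw [← hT₁] at this
    exact this
  let z2 : T₁.domain := ⟨T₁ z1, hmem⟩
  have hTz2 : T₁ z2 = -(z1 : H) := by
    have hf : T₁.IsFormalAdjoint T₀ := hT₁ ▸ LinearPMap.adjoint_isFormalAdjoint hdense
    refine hdense.eq_of_inner_left ℂ fun v hv => ?_
    rw [hf z2 ⟨v, hv⟩]
    exact (horth ⟨v, hv⟩).symm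
  have hz2c : (z2 : H) = T₁ z1 := rfl
  have hI := Complex.I_mul_I
  refine ⟨(1/2 : ℂ) • (z1 - Complex.I • z2), ?_, (1/2 : ℂ) • (z1 + Complex.I • z2), ?_, ?_⟩
  · rw [mem_defSpace]
    simp only [LinearPMap.map_smul, LinearPMap.map_sub, hTz2, Submodule.coe_smul, Submodule.coe_sub,
      hz2c]
    match_scalars
    · linear_combination (1/2 : ℂ) * hI
    · ring
  · rw [mem_defSpace]
    simp only [LinearPMap.map_smul, LinearPMap.map_add, hTz2, Submodule.coe_smul, Submodule.coe_add,
      hz2c]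
    match_scalars
    · linear_combination (1/2 : ℂ) * hI
    · ring
  · have : x - ((1/2 : ℂ) • (z1 - Complex.I • z2) + (1/2 : ℂ) • (z1 + Complex.I • z2)) = w1 := by
      have : (1/2 : ℂ) • (z1 - Complex.I • z2) + (1/2 : ℂ) • (z1 + Complex.I • z2) = z1 := by
        module
      rw [this]; simp [z1]
    rw [this]
    exact w.2

theorem def_self (T₁ : H →ₗ.[ℂ] H) (c : ℂ) (hc : c ≠ 0) (hc' : (starRingEnd ℂ) c = -c)
    (p q : T₁.domain)
    (hp : p ∈ defSpace T₁ c) (hq : q ∈ defSpace T₁ (-c)) (h : sympForm T₁ p (p + q) = 0) :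
    p = 0 := by
  rw [mem_defSpace] at hp hq
  have h2 : -(2 * c) * ⟪(p : H), (p : H)⟫ = 0 := by
    rw [← h, sympForm_add_right]
    simp only [sympForm, hp, hq, inner_smul_left, inner_smul_right, hc']
    ring
  have h3 : ⟪(p : H), (p : H)⟫ = 0 := by
    rcases mul_eq_zero.1 h2 with h | h
    · exact absurd h (by simp [hc])
    · exact h
  exact Subtype.ext (inner_self_eq_zero.1 h3)

/-- The boundary space is isomorphic to the sum of the deficiency spaces. -/
theorem boundary_equiv (T₀ T₁ : H →ₗ.[ℂ] H)
    (hdense : Dense (T₀.domain : Set H)) (hclosed : T₀.IsClosed)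
    (hT₁ : T₁ = T₀.adjoint) (hle : T₀ ≤ T₁) :
    Nonempty ((defSpace T₁ Complex.I × defSpace T₁ (-Complex.I)) ≃ₗ[ℂ]
      (T₁.domain ⧸ D0 T₀ T₁)) := by
  let f : (defSpace T₁ Complex.I × defSpace T₁ (-Complex.I)) →ₗ[ℂ] (T₁.domain ⧸ D0 T₀ T₁) :=
    (D0 T₀ T₁).mkQ ∘ₗ
      ((defSpace T₁ Complex.I).subtype.coprod (defSpace T₁ (-Complex.I)).subtype)
  have hfa : ∀ a, f a = Submodule.Quotient.mk (a.1.1 + a.2.1) := fun a => rfl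
  refine ⟨LinearEquiv.ofBijective f ⟨?_, ?_⟩⟩
  · rw [← LinearMap.ker_eq_bot, LinearMap.ker_eq_bot']
    rintro ⟨⟨p, hp⟩, ⟨q, hq⟩⟩ h
    rw [hfa, Submodule.Quotient.mk_eq_zero] at h
    have h0 : ∀ x, sympForm T₁ x (p + q) = 0 := fun x => sympForm_D0 T₀ T₁ hdense hT₁ hle x _ h
    have hp0 : p = 0 := def_self T₁ Complex.I Complex.I_ne_zero Complex.conj_I p q hp hq (h0 p)
    have hq0 : q = 0 := def_self T₁ (-Complex.I) (by simp) (by simp) q p hq (by simpa using hp)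
      (by rw [add_comm]; exact h0 q)
    subst hp0; subst hq0; rfl
  · intro u
    obtain ⟨x, rfl⟩ := Submodule.Quotient.mk_surjective _ u
    obtain ⟨p, hp, q, hq, h⟩ := von_neumann T₀ T₁ hdense hclosed hT₁ hle x
    exact ⟨(⟨p, hp⟩, ⟨q, hq⟩), ((Submodule.Quotient.eq _).2 h).symm⟩

theorem finrank_orth (T₀ T₁ : H →ₗ.[ℂ] H) (hT₁adj : T₁.adjoint = T₀)
    (hvan : ∀ x y : T₁.domain, y ∈ D0 T₀ T₁ → sympForm T₁ x y = 0)
    [FiniteDimensional ℂ (T₁.domain ⧸ D0 T₀ T₁)] {d : ℕ} (t : Fin d → T₁.domain)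
    (ht : ∀ α : Fin d → ℂ, ((∑ j, α j • t j : T₁.domain) : H) ∈ T₀.domain → ∀ j, α j = 0)
    (L : Submodule ℂ (T₁.domain ⧸ D0 T₀ T₁))
    (hL : ∀ x : T₁.domain, Submodule.Quotient.mk (p := D0 T₀ T₁) x ∈ L ↔
      ∀ j, sympForm T₁ x (t j) = 0) :
    d + Module.finrank ℂ L = Module.finrank ℂ (T₁.domain ⧸ D0 T₀ T₁) := by
  let F : T₁.domain →ₗ[ℂ] (Fin d → ℂ) := LinearMap.pi fun j => sympLin T₁ (t j)
  have hF : ∀ x j, F x j = sympForm T₁ (t j) x := fun x j => rfl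
  have hle : D0 T₀ T₁ ≤ LinearMap.ker F := by
    intro y hy
    rw [LinearMap.mem_ker]
    ext j
    exact hvan _ _ hy
  let G := (D0 T₀ T₁).liftQ F hle
  have hG : ∀ x : T₁.domain, G (Submodule.Quotient.mk x) = F x := fun x => rfl
  have hker : LinearMap.ker G = L := by
    ext u
    obtain ⟨x, rfl⟩ := Submodule.Quotient.mk_surjective _ u
    rw [LinearMap.mem_ker, hG, hL, funext_iff]
    exact forall_congr' fun j => ⟨sympForm_symm_zero T₁, sympForm_symm_zero T₁⟩
  have hsurj : LinearMap.range G = ⊤ := by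
    by_contra hne
    obtain ⟨f, hf0, hf⟩ := Submodule.exists_le_ker_of_lt_top _ (lt_top_iff_ne_top.2 hne)
    apply hf0
    have hfe : ∀ v, f v = ∑ j, v j * f (Pi.single j 1) := by
      intro v
      conv_lhs => rw [pi_eq_sum_univ' v, map_sum]
      simp
    have key : ∀ x, ∑ j, (starRingEnd ℂ) (f (Pi.single j 1)) * sympForm T₁ x (t j) = 0 := by
      intro x
      have h1 : f (F x) = 0 := hf ⟨Submodule.Quotient.mk x, hG x⟩
      rw [hfe] at h1
      have h2 := congrArg (starRingEnd ℂ) h1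
      rw [map_sum, map_zero] at h2
      rw [← neg_eq_zero, ← h2, ← Finset.sum_neg_distrib]
      refine Finset.sum_congr rfl fun j _ => ?_
      rw [sympForm_conj T₁ x, hF, map_mul]; ring
    have hz := sympForm_nondeg T₀ T₁ hT₁adj
      (∑ j, (starRingEnd ℂ) (f (Pi.single j 1)) • t j) (fun y => by
        apply sympForm_symm_zero
        rw [sympForm_sum_right]
        exact key y)
    have hc := ht _ hz
    ext j
    simpa using hc j
  have := LinearMap.finrank_range_add_finrank_ker G
  rw [hsurj, hker, finrank_top, Module.finrank_fin_fun] at this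
  exact this

/-!
STATEMENT 5: a Lagrangian subspace `L ⊆ S'` is complete iff (i) `dim L = def(T₀)` and
(ii) `L = {φx : x ∈ D(T₁), [x,tⱼ]_H = 0 (j = 1,…,m)}` for some GKN set `t₁,…,t_m` for
`T₀` (`m = def(T₀)`).  Moreover, in this case `φ⁻¹(L) = {x ∈ D(T₁) : [x,tⱼ]_H = 0 ∀ j}`.
-/
theorem complete_lagrangian_characterization
    (T₀ T₁ : H →ₗ.[ℂ] H)
    (hdense : Dense (T₀.domain : Set H))
    (hsymm : T₀.IsFormalAdjoint T₀)
    (hclosed : T₀.IsClosed)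
    (hT₁ : T₁ = T₀.adjoint)
    (hT₁adj : T₁.adjoint = T₀)
    (hle : T₀ ≤ T₁)
    [FiniteDimensional ℂ (defSpace T₁ Complex.I)]
    [FiniteDimensional ℂ (defSpace T₁ (-Complex.I))]
    (hpos : 1 ≤ defIndex T₁)
    (heq : Module.finrank ℂ (defSpace T₁ Complex.I)
         = Module.finrank ℂ (defSpace T₁ (-Complex.I)))
    (L : Submodule ℂ (T₁.domain ⧸ D0 T₀ T₁))
    (hLag : IsLagrangianRep T₀ T₁ L) :
    (IsCompleteRep T₀ T₁ L ↔
      (Module.finrank ℂ L = defIndex T₁ ∧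
        ∃ t : Fin (defIndex T₁) → T₁.domain, IsGKNFamily T₀ T₁ t ∧
          (L : Set (T₁.domain ⧸ D0 T₀ T₁)) =
            {u | ∃ x : T₁.domain, Submodule.Quotient.mk (p := D0 T₀ T₁) x = u ∧
              ∀ j, sympForm T₁ x (t j) = 0})) ∧
    (IsCompleteRep T₀ T₁ L →
      ∀ t : Fin (defIndex T₁) → T₁.domain, IsGKNFamily T₀ T₁ t →
        (L : Set (T₁.domain ⧸ D0 T₀ T₁)) =
          {u | ∃ x : T₁.domain, Submodule.Quotient.mk (p := D0 T₀ T₁) x = u ∧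
            ∀ j, sympForm T₁ x (t j) = 0} →
        {x : T₁.domain | Submodule.Quotient.mk (p := D0 T₀ T₁) x ∈ L} =
          {x : T₁.domain | ∀ j, sympForm T₁ x (t j) = 0}) := by
  have hvan : ∀ x y : T₁.domain, y ∈ D0 T₀ T₁ → sympForm T₁ x y = 0 :=
    sympForm_D0 T₀ T₁ hdense hT₁ hle
  have hcongr : ∀ x x' y : T₁.domain, Submodule.Quotient.mk (p := D0 T₀ T₁) x =
      Submodule.Quotient.mk x' → sympForm T₁ y x = sympForm T₁ y x' := by
    intro x x' y h
    have h1 := hvan y _ ((Submodule.Quotient.eq _).1 h)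
    have h2 := sympForm_add_right T₁ y (x - x') x'
    rw [h1, sub_add_cancel, zero_add] at h2
    exact h2
  obtain ⟨e⟩ := boundary_equiv T₀ T₁ hdense hclosed hT₁ hle
  have : FiniteDimensional ℂ (T₁.domain ⧸ D0 T₀ T₁) := Module.Finite.equiv e
  have hdim : Module.finrank ℂ (T₁.domain ⧸ D0 T₀ T₁) = defIndex T₁ + defIndex T₁ := by
    rw [← e.finrank_eq, Module.finrank_prod, ← heq]; rfl
  refine ⟨⟨fun hc => ?_, ?_⟩, ?_⟩
  · have main : ∀ d : ℕ, Module.finrank ℂ L = d → ∃ t : Fin d → T₁.domain,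
        IsGKNFamily T₀ T₁ t ∧ ∀ x : T₁.domain, Submodule.Quotient.mk (p := D0 T₀ T₁) x ∈ L ↔
          ∀ j, sympForm T₁ x (t j) = 0 := by
      intro d hd
      let b := Module.finBasisOfFinrankEq ℂ L hd
      choose t ht using fun j => Submodule.Quotient.mk_surjective (D0 T₀ T₁) (b j : _ ⧸ _)
      have htL : ∀ j, Submodule.Quotient.mk (p := D0 T₀ T₁) (t j) ∈ L := fun j => by
        rw [ht j]; exact (b j).2
      refine ⟨t, ⟨?_, fun i j => hLag _ _ (htL i) (htL j)⟩, fun x =>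
        ⟨fun hx j => hLag _ _ hx (htL j), fun hx => hc x fun y hy => ?_⟩⟩
      · intro α hα
        have h1 : (D0 T₀ T₁).mkQ (∑ j, α j • t j) = 0 := (Submodule.Quotient.mk_eq_zero _).2 hα
        have h2 : ∑ j, α j • b j = 0 := by
          apply Subtype.ext
          rw [map_sum] at h1
          simp only [map_smul, Submodule.mkQ_apply, ht] at h1
          simpa using h1
        exact Fintype.linearIndependent_iff.1 b.linearIndependent α h2
      · have h3 : Submodule.Quotient.mk (p := D0 T₀ T₁) y =
            Submodule.Quotient.mk (∑ j, b.repr ⟨_, hy⟩ j • t j) := by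
          have h4 := congrArg Subtype.val (b.sum_repr ⟨_, hy⟩)
          change _ = (D0 T₀ T₁).mkQ _
          rw [map_sum]
          simp only [map_smul, Submodule.mkQ_apply, ht]
          rw [AddSubmonoidClass.coe_finsetSum] at h4
          exact h4.symm
        rw [hcongr _ _ x h3, sympForm_sum_right]
        simp [hx]
    have hd : Module.finrank ℂ L = defIndex T₁ := by
      obtain ⟨t, hg, hL⟩ := main _ rfl
      have := finrank_orth T₀ T₁ hT₁adj hvan t hg.1 L hL
      omega
    obtain ⟨t, hg, hL⟩ := main _ hd
    refine ⟨hd, t, hg, ?_⟩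
    ext u
    obtain ⟨x, rfl⟩ := Submodule.Quotient.mk_surjective _ u
    refine ⟨fun h => ⟨x, rfl, (hL x).1 h⟩, ?_⟩
    rintro ⟨x', hx', h⟩
    rw [← hx']
    exact (hL x').2 h
  · rintro ⟨-, t, hg, hL⟩ x hx
    have hLm : ∀ x : T₁.domain, (∀ j, sympForm T₁ x (t j) = 0) →
        Submodule.Quotient.mk (p := D0 T₀ T₁) x ∈ L := by
      intro x hx
      rw [← SetLike.mem_coe, hL]
      exact ⟨x, rfl, hx⟩
    exact hLm x fun j => hx _ (hLm _ fun i => hg.2 j i)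
  · intro _ t _ hL
    ext x
    change Submodule.Quotient.mk (p := D0 T₀ T₁) x ∈ L ↔ ∀ j, sympForm T₁ x (t j) = 0
    rw [← SetLike.mem_coe, hL]
    constructor
    · rintro ⟨x', hx', h⟩ j
      apply sympForm_symm_zero
      rw [← hcongr _ _ (t j) hx']
      exact sympForm_symm_zero T₁ (h j)
    · exact fun h => ⟨x, rfl, h⟩
end
end

section
/- If L is a complete Lagrangian subspace of the boundary space S′, then L has dimension def(T₀), and the operator T defined by Tx = T₁x on D(T) := {x ∈ D(T₁) : φx ∈ L} is a self-adjoint operator in H satisfying T₀ ⊆ T ⊆ T₁; moreover φ⁻¹(L) = D(T). -/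
open scoped ComplexInnerProductSpace

noncomputable section

variable {H : Type*} [NormedAddCommGroup H] [InnerProductSpace ℂ H] [CompleteSpace H]

open LinearPMap in
theorem aux_range_closed (T₀ : H →ₗ.[ℂ] H) (hsymm : T₀.IsFormalAdjoint T₀)
    (hclosed : T₀.IsClosed) :
    IsClosed ((LinearMap.range (T₀.toFun + Complex.I • T₀.domain.subtype) : Submodule ℂ H) :
      Set H) := by
  have hc : CompleteSpace T₀.graph := IsClosed.completeSpace_coe (hs := hclosed)
  let g : T₀.graph →L[ℂ] H :=
    ((ContinuousLinearMap.snd ℂ H H) + Complex.I • (ContinuousLinearMap.fst ℂ H H)).comp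
      T₀.graph.subtypeL
  have hg : ∀ x, ‖x‖ ≤ 1 * ‖g x‖ := by
    rintro ⟨⟨a, b⟩, hab⟩
    obtain ⟨y, rfl, rfl⟩ := (LinearPMap.mem_graph_iff T₀).1 hab
    have h1 : ‖T₀ y + Complex.I • (y : H)‖ ^ 2 = ‖T₀ y‖ ^ 2 + ‖(y : H)‖ ^ 2 := by
      rw [@norm_add_sq ℂ]
      have h2 := hsymm y y
      have h3 : (⟪T₀ y, (y : H)⟫).im = 0 := by
        have := congrArg Complex.im h2
        rw [← inner_conj_symm (y : H) (T₀ y), Complex.conj_im] at this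
        linarith
      simp [inner_smul_right, norm_smul, h3]
    have h4 : ‖T₀ y‖ ≤ ‖T₀ y + Complex.I • (y : H)‖ := by
      exact (sq_le_sq₀ (norm_nonneg _) (norm_nonneg _)).1 (by nlinarith [sq_nonneg ‖T₀ y‖, sq_nonneg ‖(y : H)‖])
    have h5 : ‖(y : H)‖ ≤ ‖T₀ y + Complex.I • (y : H)‖ := by
      exact (sq_le_sq₀ (norm_nonneg _) (norm_nonneg _)).1 (by nlinarith [sq_nonneg ‖T₀ y‖, sq_nonneg ‖(y : H)‖])
    rw [one_mul]
    exact max_le h5 h4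
  have ha : AntilipschitzWith 1 g := by
    apply AddMonoidHomClass.antilipschitz_of_bound g
    simpa using hg
  have := ha.isClosed_range g.uniformContinuous
  convert this using 1
  ext z
  constructor
  · rintro ⟨y, rfl⟩
    exact ⟨⟨((y : H), T₀ y), T₀.mem_graph y⟩, rfl⟩
  · rintro ⟨⟨⟨a, b⟩, hab⟩, rfl⟩
    obtain ⟨y, rfl, rfl⟩ := (LinearPMap.mem_graph_iff T₀).1 hab
    exact ⟨y, rfl⟩

theorem aux_zero (T₁ : H →ₗ.[ℂ] H) (u : T₁.domain) (c : ℂ) (hc : c = Complex.I ∨ c = -Complex.I)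
    (hu : T₁ u = c • (u : H)) (h : sympForm T₁ u u = 0) : u = 0 := by
  unfold sympForm at h
  rw [hu, inner_smul_left, inner_smul_right] at h
  have : ⟪(u : H), (u : H)⟫ = 0 := by
    rcases hc with rfl | rfl
    · have h' : (-2 * Complex.I) * ⟪(u : H), (u : H)⟫ = 0 := by
        rw [← h, Complex.conj_I]; ring
      simpa using h'
    · have h' : (2 * Complex.I) * ⟪(u : H), (u : H)⟫ = 0 := by
        rw [← h, map_neg, Complex.conj_I]; ring
      simpa using h'
  exact Subtype.ext (inner_self_eq_zero.1 this)

theorem aux_mem_adj (T₀ T₁ : H →ₗ.[ℂ] H)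
    (hdense : Dense (T₀.domain : Set H)) (hT₁ : T₁ = T₀.adjoint) (y w : H)
    (h : ∀ x : T₀.domain, ⟪w, (x : H)⟫ = ⟪y, T₀ x⟫) :
    ∃ hy : y ∈ T₁.domain, T₁ ⟨y, hy⟩ = w := by
  subst hT₁
  have hy := LinearPMap.mem_adjoint_domain_of_exists (T := T₀) y ⟨w, h⟩
  exact ⟨hy, LinearPMap.adjoint_apply_eq hdense ⟨y, hy⟩ h⟩

theorem aux_orth (T₀ T₁ : H →ₗ.[ℂ] H)
    (hdense : Dense (T₀.domain : Set H)) (hT₁ : T₁ = T₀.adjoint) :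
    (LinearMap.range (T₀.toFun + Complex.I • T₀.domain.subtype))ᗮ =
      (defSpace T₁ Complex.I).map T₁.domain.subtype := by
  ext w
  constructor
  · intro hw
    obtain ⟨hy, h⟩ := aux_mem_adj T₀ T₁ hdense hT₁ w (Complex.I • w) (by
      intro x
      have := (Submodule.mem_orthogonal' _ _).1 hw _ ⟨x, rfl⟩
      change ⟪w, T₀ x + Complex.I • (x : H)⟫ = 0 at this
      rw [inner_add_right, inner_smul_right] at this
      rw [inner_smul_left, Complex.conj_I]
      linear_combination -this)
    refine ⟨⟨w, hy⟩, ?_, rfl⟩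
    change T₁ ⟨w, hy⟩ - Complex.I • w = 0
    rw [h, sub_self]
  · rintro ⟨y, hy, rfl⟩
    have hy' : T₁ y = Complex.I • (y : H) := sub_eq_zero.1 hy
    rw [Submodule.mem_orthogonal']
    rintro _ ⟨x, rfl⟩
    change ⟪(y : H), T₀ x + Complex.I • (x : H)⟫ = 0
    have h : ⟪T₁ y, (x : H)⟫ = ⟪(y : H), T₀ x⟫ := by
      subst hT₁
      exact LinearPMap.adjoint_isFormalAdjoint hdense y x
    rw [hy', inner_smul_left, Complex.conj_I] at h
    rw [inner_add_right, inner_smul_right]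
    linear_combination -h

set_option maxHeartbeats 1000000 in
theorem aux_finrank (T₀ T₁ : H →ₗ.[ℂ] H)
    (hdense : Dense (T₀.domain : Set H))
    (hsymm : T₀.IsFormalAdjoint T₀)
    (hclosed : T₀.IsClosed)
    (hT₁ : T₁ = T₀.adjoint)
    (hle : T₀ ≤ T₁)
    [FiniteDimensional ℂ (defSpace T₁ Complex.I)]
    (L : Submodule ℂ (T₁.domain ⧸ D0 T₀ T₁))
    (hLag : IsLagrangianRep T₀ T₁ L)
    (hComp : IsCompleteRep T₀ T₁ L) :
    Module.finrank ℂ L = defIndex T₁ := by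
  set R : Submodule ℂ H := LinearMap.range (T₀.toFun + Complex.I • T₀.domain.subtype) with hR
  have hRc : IsClosed (R : Set H) := aux_range_closed T₀ hsymm hclosed
  have : CompleteSpace R := hRc.completeSpace_coe
  set K : Submodule ℂ H := (defSpace T₁ Complex.I).map T₁.domain.subtype with hK
  have hRK : Rᗮ = K := aux_orth T₀ T₁ hdense hT₁
  have hKR : Kᗮ = R := by rw [← hRK, Submodule.orthogonal_orthogonal]
  have hKdim : Module.finrank ℂ K = defIndex T₁ :=
    (Submodule.equivMapOfInjective _ T₁.domain.injective_subtype
      (defSpace T₁ Complex.I)).finrank_eq.symm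
  let N : Submodule ℂ T₁.domain := L.comap (D0 T₀ T₁).mkQ
  let A : T₁.domain →ₗ[ℂ] H := T₁.toFun + Complex.I • T₁.domain.subtype
  let f : N →ₗ[ℂ] K := (K.orthogonalProjectionOnto : H →ₗ[ℂ] K) ∘ₗ A ∘ₗ N.subtype
  let g : N →ₗ[ℂ] L := (D0 T₀ T₁).mkQ.restrict (p := N) (q := L) (fun x hx => hx)
  have hg : Function.Surjective g := by
    rintro ⟨l, hl⟩
    obtain ⟨x, rfl⟩ := (D0 T₀ T₁).mkQ_surjective l
    exact ⟨⟨x, hl⟩, rfl⟩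
  have hf : Function.Surjective f := by
    rw [← LinearMap.range_eq_top, ← Submodule.orthogonal_eq_bot_iff, eq_bot_iff]
    rintro ⟨_, ⟨w, hw, rfl⟩⟩ hwo
    have hw' : T₁ w = Complex.I • (w : H) := sub_eq_zero.1 hw
    have h0 : ∀ x : T₁.domain, x ∈ N → sympForm T₁ w x = 0 := by
      intro x hx
      have h1 := (Submodule.mem_orthogonal' _ _).1 hwo _ ⟨⟨x, hx⟩, rfl⟩
      change ⟪_, K.orthogonalProjectionOnto (A x)⟫ = 0 at h1
      rw [Submodule.inner_orthogonalProjectionOnto_eq_of_mem_left] at h1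
      change ⟪(w : H), T₁ x + Complex.I • (x : H)⟫ = 0 at h1
      rw [inner_add_right, inner_smul_right] at h1
      unfold sympForm
      rw [hw', inner_smul_left, Complex.conj_I]
      linear_combination -h1
    have hwN : w ∈ N := hComp w h0
    have hw0 := aux_zero T₁ w _ (Or.inl rfl) hw' (h0 w hwN)
    subst hw0
    rfl
  have hker : LinearMap.ker f = LinearMap.ker g := by
    ext ⟨x, hx⟩
    have e1 : (⟨x, hx⟩ : N) ∈ LinearMap.ker f ↔ A x ∈ R := by
      rw [← hKR]
      have e0 : f ⟨x, hx⟩ = K.orthogonalProjectionOnto (A x) := rfl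
      rw [LinearMap.mem_ker, e0]
      exact Submodule.orthogonalProjectionOnto_eq_zero_iff
    have e2 : (⟨x, hx⟩ : N) ∈ LinearMap.ker g ↔ x ∈ D0 T₀ T₁ := by
      rw [LinearMap.mem_ker, ← Submodule.Quotient.mk_eq_zero (D0 T₀ T₁)]
      exact Subtype.ext_iff
    rw [e1, e2]
    constructor
    · rintro ⟨z, hz⟩
      have hz1 : (z : H) ∈ T₁.domain := hle.1 z.2
      have hzT : T₀ z = T₁ ⟨z, hz1⟩ := hle.2 rfl
      have hz0 : (⟨z, hz1⟩ : T₁.domain) ∈ D0 T₀ T₁ := z.2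
      have hzN : (⟨z, hz1⟩ : T₁.domain) ∈ N := by
        change (D0 T₀ T₁).mkQ _ ∈ L
        have : (D0 T₀ T₁).mkQ ⟨z, hz1⟩ = 0 := (Submodule.Quotient.mk_eq_zero _).2 hz0
        rw [this]; exact L.zero_mem
      have huN := N.sub_mem hx hzN
      have hz' : T₁ ⟨z, hz1⟩ + Complex.I • (z : H) = T₁ x + Complex.I • (x : H) := by
        rw [← hzT]; exact hz
      have hu : T₁ (x - ⟨z, hz1⟩) = (-Complex.I) • ((x - ⟨z, hz1⟩ : T₁.domain) : H) := by
        rw [LinearPMap.map_sub]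
        change _ = (-Complex.I) • ((x : H) - (z : H))
        rw [neg_smul, smul_sub, sub_eq_iff_eq_add, eq_comm, ← sub_eq_zero]
        rw [← sub_eq_zero] at hz'
        rw [← hz']
        abel
      have h0 := aux_zero T₁ _ _ (Or.inr rfl) hu (hLag _ _ huN huN)
      rw [sub_eq_zero.1 h0]
      exact hz0
    · intro h
      refine ⟨⟨x, h⟩, ?_⟩
      have : T₀ ⟨x, h⟩ = T₁ x := hle.2 rfl
      change T₀ ⟨x, h⟩ + Complex.I • (x : H) = T₁ x + Complex.I • (x : H)
      rw [this]
  rw [← hKdim]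
  exact (((f.quotKerEquivOfSurjective hf).symm.trans
    (Submodule.quotEquivOfEq _ _ hker)).trans (g.quotKerEquivOfSurjective hg)).finrank_eq.symm

/-!
STATEMENT 7: if `L` is a complete Lagrangian subspace of `S'`, then `dim L = def(T₀)`
and the operator `T` with `Tx = T₁x` on `D(T) := {x ∈ D(T₁) : φx ∈ L}` is a
self-adjoint operator with `T₀ ⊆ T ⊆ T₁`; moreover `φ⁻¹(L) = D(T)`.
-/
theorem complete_lagrangian_gives_selfAdjoint_extension
    (T₀ T₁ : H →ₗ.[ℂ] H)
    (hdense : Dense (T₀.domain : Set H))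
    (hsymm : T₀.IsFormalAdjoint T₀)
    (hclosed : T₀.IsClosed)
    (hT₁ : T₁ = T₀.adjoint)
    (hT₁adj : T₁.adjoint = T₀)
    (hle : T₀ ≤ T₁)
    [FiniteDimensional ℂ (defSpace T₁ Complex.I)]
    [FiniteDimensional ℂ (defSpace T₁ (-Complex.I))]
    (hpos : 1 ≤ defIndex T₁)
    (heq : Module.finrank ℂ (defSpace T₁ Complex.I)
         = Module.finrank ℂ (defSpace T₁ (-Complex.I)))
    (L : Submodule ℂ (T₁.domain ⧸ D0 T₀ T₁))
    (hLag : IsLagrangianRep T₀ T₁ L)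
    (hComp : IsCompleteRep T₀ T₁ L) :
    Module.finrank ℂ L = defIndex T₁ ∧
    ∃ T : H →ₗ.[ℂ] H, T.adjoint = T ∧ T₀ ≤ T ∧ T ≤ T₁ ∧
      (T.domain : Set H) =
        Subtype.val '' {x : T₁.domain | Submodule.Quotient.mk (p := D0 T₀ T₁) x ∈ L} := by
  refine ⟨aux_finrank T₀ T₁ hdense hsymm hclosed hT₁ hle L hLag hComp, ?_⟩
  let N : Submodule ℂ T₁.domain := L.comap (D0 T₀ T₁).mkQ
  let T : H →ₗ.[ℂ] H := T₁.domRestrict (N.map T₁.domain.subtype)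
  have hTT₁ : T ≤ T₁ := LinearPMap.domRestrict_le
  have hdom : ∀ x : T₁.domain, (x : H) ∈ T.domain ↔ x ∈ N := by
    intro x
    constructor
    · rintro ⟨⟨y, hy, hyx⟩, -⟩
      rwa [← show y = x from Subtype.ext hyx]
    · intro h
      exact ⟨⟨x, h, rfl⟩, x.2⟩
  have hT₀T : T₀ ≤ T := by
    refine ⟨fun z hz => ?_, fun x y hxy => ?_⟩
    · refine (hdom ⟨z, hle.1 hz⟩).2 ?_
      change (D0 T₀ T₁).mkQ _ ∈ L
      have : (D0 T₀ T₁).mkQ ⟨z, hle.1 hz⟩ = 0 := (Submodule.Quotient.mk_eq_zero _).2 hz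
      rw [this]; exact L.zero_mem
    · rw [hle.2 (x := x) (y := ⟨x, hle.1 x.2⟩) rfl]
      exact (hTT₁.2 hxy.symm).symm
  have hTd : Dense (T.domain : Set H) := hdense.mono hT₀T.1
  have hTval : ∀ x : T.domain, T x = T₁ ⟨x, hTT₁.1 x.2⟩ := fun x => hTT₁.2 rfl
  have hfa : T.IsFormalAdjoint T := by
    intro x y
    have := hLag ⟨x, hTT₁.1 x.2⟩ ⟨y, hTT₁.1 y.2⟩ ((hdom ⟨x, _⟩).1 x.2) ((hdom ⟨y, _⟩).1 y.2)
    rw [hTval, hTval]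
    exact sub_eq_zero.1 this
  have hTle : T ≤ T.adjoint := hfa.le_adjoint hTd
  refine ⟨T, ?_, hT₀T, hTT₁, ?_⟩
  · symm
    refine LinearPMap.eq_of_le_of_domain_eq hTle (le_antisymm hTle.1 ?_)
    intro y hy
    have hadj := LinearPMap.adjoint_isFormalAdjoint hTd ⟨y, hy⟩
    obtain ⟨hy1, hy2⟩ := aux_mem_adj T₀ T₁ hdense hT₁ y (T.adjoint ⟨y, hy⟩) (by
      intro x
      rw [hT₀T.2 (x := x) (y := ⟨x, hT₀T.1 x.2⟩) rfl]
      exact hadj ⟨x, hT₀T.1 x.2⟩)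
    refine (hdom ⟨y, hy1⟩).2 (hComp _ ?_)
    intro x hx
    have hxT := (hdom x).2 hx
    unfold sympForm
    rw [hy2, sub_eq_zero, ← hTval ⟨x, hxT⟩]
    exact hadj ⟨x, hxT⟩
  · ext z
    constructor
    · rintro ⟨⟨y, hy, hyx⟩, -⟩
      exact ⟨y, hy, hyx⟩
    · rintro ⟨y, hy, rfl⟩
      exact (hdom y).2 hy
end
end

section
/- If T is a self-adjoint operator in H satisfying T₀ ⊆ T ⊆ T₁ (i.e., D(T₀) ⊆ D(T) ⊆ D(T₁) and T agrees with T₁ on D(T)), then there exists a GKN set t₁,…,t_m for T₀ (m = def(T₀)) such that D(T) = {x ∈ D(T₁) : [x,tⱼ]_H = 0 for j = 1,…,m}. -/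
open scoped ComplexInnerProductSpace

noncomputable section

variable {H : Type*} [NormedAddCommGroup H] [InnerProductSpace ℂ H] [CompleteSpace H]

lemma gkn_norm_sq (A : H →ₗ.[ℂ] H) (hs : A.IsFormalAdjoint A) (x : A.domain) :
    ‖A x + Complex.I • (x : H)‖ ^ 2 = ‖A x‖ ^ 2 + ‖(x : H)‖ ^ 2 := by
  have h := hs x x
  have h2 : (starRingEnd ℂ) ⟪A x, (x : H)⟫ = ⟪A x, (x : H)⟫ := by
    rw [inner_conj_symm, h]
  have him : (⟪A x, (x : H)⟫).im = 0 := Complex.conj_eq_iff_im.mp h2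
  rw [@norm_add_sq ℂ, inner_smul_right, norm_smul]
  simp [him]

lemma gkn_closed_range (A : H →ₗ.[ℂ] H) (hs : A.IsFormalAdjoint A) (hc : A.IsClosed) :
    IsClosed ((LinearMap.range (A.toFun + Complex.I • A.domain.subtype) : Submodule ℂ H) : Set H) := by
  let g : A.graph →L[ℂ] H :=
    (ContinuousLinearMap.snd ℂ H H + Complex.I • ContinuousLinearMap.fst ℂ H H).comp
      A.graph.subtypeL
  have : CompleteSpace A.graph := IsClosed.completeSpace_coe (hs := hc)
  have hb : AntilipschitzWith 1 g := by
    refine AddMonoidHomClass.antilipschitz_of_bound g ?_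
    rintro ⟨⟨a, b⟩, hab⟩
    obtain ⟨x, rfl, rfl⟩ := (LinearPMap.mem_graph_iff A).1 hab
    have h := gkn_norm_sq A hs x
    have hg : g ⟨((x : H), A x), hab⟩ = A x + Complex.I • (x : H) := rfl
    rw [hg]
    change max ‖(x : H)‖ ‖A x‖ ≤ _
    simp only [NNReal.coe_one, one_mul]
    refine max_le ?_ ?_
    · refine le_of_sq_le_sq ?_ (norm_nonneg _)
      nlinarith [sq_nonneg ‖A x‖]
    · refine le_of_sq_le_sq ?_ (norm_nonneg _)
      nlinarith [sq_nonneg ‖(x : H)‖]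
  have := hb.isClosed_range g.uniformContinuous
  convert this using 1
  ext v
  constructor
  · rintro ⟨x, rfl⟩
    exact ⟨⟨((x : H), A x), A.mem_graph x⟩, rfl⟩
  · rintro ⟨⟨⟨a, b⟩, hab⟩, rfl⟩
    obtain ⟨x, rfl, rfl⟩ := (LinearPMap.mem_graph_iff A).1 hab
    exact ⟨x, rfl⟩

lemma gkn_mem_orth (A : H →ₗ.[ℂ] H) (hd : Dense (A.domain : Set H)) (v : H) :
    v ∈ (LinearMap.range (A.toFun + Complex.I • A.domain.subtype))ᗮ ↔
      ∃ h : v ∈ A.adjoint.domain, A.adjoint ⟨v, h⟩ = Complex.I • v := by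
  rw [Submodule.mem_orthogonal']
  have key : ∀ x : A.domain, ⟪v, (A.toFun + Complex.I • A.domain.subtype) x⟫
      = ⟪v, A x⟫ - ⟪Complex.I • v, (x : H)⟫ := by
    intro x
    change ⟪v, A x + Complex.I • (x : H)⟫ = _
    rw [inner_add_right, inner_smul_right, inner_smul_left]
    simp
  constructor
  · intro h
    have h' : ∀ x : A.domain, ⟪Complex.I • v, (x : H)⟫ = ⟪v, A x⟫ := by
      intro x
      have := h _ ⟨x, rfl⟩
      rw [key, sub_eq_zero] at this
      exact this.symm
    have hm := LinearPMap.mem_adjoint_domain_of_exists v ⟨_, h'⟩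
    exact ⟨hm, LinearPMap.adjoint_apply_eq hd ⟨v, hm⟩ h'⟩
  · rintro ⟨hm, h⟩ _ ⟨x, rfl⟩
    have := LinearPMap.adjoint_isFormalAdjoint hd ⟨v, hm⟩ x
    rw [key, ← h, this, sub_self]

lemma gkn_finrank (T₀ : H →ₗ.[ℂ] H) (hd : Dense (T₀.domain : Set H)) :
    Nonempty (defSpace T₀.adjoint Complex.I ≃ₗ[ℂ]
      ((LinearMap.range (T₀.toFun + Complex.I • T₀.domain.subtype))ᗮ : Submodule ℂ H)) := by
  have hmem : ∀ y : T₀.adjoint.domain, y ∈ defSpace T₀.adjoint Complex.I ↔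
      T₀.adjoint y = Complex.I • (y : H) := by
    intro y
    rw [defSpace, LinearMap.mem_ker]
    exact sub_eq_zero
  let f : defSpace T₀.adjoint Complex.I →ₗ[ℂ] H :=
    T₀.adjoint.domain.subtype.comp (Submodule.subtype _)
  have hf : ∀ x, f x ∈ (LinearMap.range (T₀.toFun + Complex.I • T₀.domain.subtype))ᗮ := by
    rintro ⟨x, hx⟩
    exact (gkn_mem_orth T₀ hd _).2 ⟨x.2, (hmem x).1 hx⟩
  refine ⟨LinearEquiv.ofBijective (f.codRestrict _ hf) ⟨?_, ?_⟩⟩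
  · intro x y hxy
    have h := congrArg Subtype.val hxy
    exact Subtype.ext (Subtype.ext h)
  · rintro ⟨v, hv⟩
    obtain ⟨h, h2⟩ := (gkn_mem_orth T₀ hd _).1 hv
    exact ⟨⟨⟨v, h⟩, (hmem _).2 h2⟩, rfl⟩

/-!
STATEMENT 8 (GKN-EM, necessity): if `T` is self-adjoint with `T₀ ⊆ T ⊆ T₁`, then there
is a GKN set `t₁,…,t_m` for `T₀` (`m = def(T₀)`) with
`D(T) = {x ∈ D(T₁) : [x,tⱼ]_H = 0, j = 1,…,m}`.
-/
theorem selfAdjoint_extension_is_GKN_restriction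
    (T₀ T₁ : H →ₗ.[ℂ] H)
    (hdense : Dense (T₀.domain : Set H))
    (hsymm : T₀.IsFormalAdjoint T₀)
    (hclosed : T₀.IsClosed)
    (hT₁ : T₁ = T₀.adjoint)
    (hT₁adj : T₁.adjoint = T₀)
    (hle : T₀ ≤ T₁)
    [FiniteDimensional ℂ (defSpace T₁ Complex.I)]
    [FiniteDimensional ℂ (defSpace T₁ (-Complex.I))]
    (hpos : 1 ≤ defIndex T₁)
    (heq : Module.finrank ℂ (defSpace T₁ Complex.I)
         = Module.finrank ℂ (defSpace T₁ (-Complex.I)))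
    (T : H →ₗ.[ℂ] H)
    (hTsa : T.adjoint = T)
    (hT₀T : T₀ ≤ T) (hTT₁ : T ≤ T₁) :
    ∃ t : Fin (defIndex T₁) → T₁.domain, IsGKNFamily T₀ T₁ t ∧
      (T.domain : Set H) =
        Subtype.val '' {x : T₁.domain | ∀ j, sympForm T₁ x (t j) = 0} := by
  have hTd : Dense (T.domain : Set H) := hdense.mono hT₀T.1
  have hTs : T.IsFormalAdjoint T := by
    have := LinearPMap.adjoint_isFormalAdjoint hTd
    rwa [hTsa] at this
  have hTc : T.IsClosed := by
    have := LinearPMap.adjoint_isClosed hTd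
    rwa [hTsa] at this
  subst hT₁
  set R₀ : Submodule ℂ H := LinearMap.range (T₀.toFun + Complex.I • T₀.domain.subtype) with hR₀
  have hR₀c : IsClosed (R₀ : Set H) := gkn_closed_range T₀ hsymm hclosed
  have : CompleteSpace R₀ := IsClosed.completeSpace_coe (hs := hR₀c)
  obtain ⟨e⟩ := gkn_finrank T₀ hdense
  have hinj : ∀ x : T.domain, T x + Complex.I • (x : H) = 0 → x = 0 := by
    intro x hx
    have h := gkn_norm_sq T hTs x
    rw [hx] at h
    have : ‖(x : H)‖ = 0 := by
      simp only [norm_zero] at h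
      nlinarith [sq_nonneg ‖T x‖, sq_nonneg ‖(x : H)‖]
    exact Subtype.ext (norm_eq_zero.1 this)
  -- surjectivity of `T + i`
  have hsurj : ∀ v : H, ∃ x : T.domain, T x + Complex.I • (x : H) = v := by
    have hRc := gkn_closed_range T hTs hTc
    have : CompleteSpace (LinearMap.range (T.toFun + Complex.I • T.domain.subtype)) :=
      IsClosed.completeSpace_coe (hs := hRc)
    have htop : LinearMap.range (T.toFun + Complex.I • T.domain.subtype) = ⊤ := by
      rw [← Submodule.orthogonal_eq_bot_iff, Submodule.eq_bot_iff]
      intro v hv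
      rw [gkn_mem_orth T hTd, hTsa] at hv
      obtain ⟨hm, h⟩ := hv
      have h1 := hTs ⟨v, hm⟩ ⟨v, hm⟩
      rw [h] at h1
      simp only [inner_smul_left, inner_smul_right, Complex.conj_I] at h1
      have h2 : Complex.I * ⟪v, v⟫ = 0 := by linear_combination (-1 / 2 : ℂ) * h1
      simpa using h2
    intro v
    have : v ∈ LinearMap.range (T.toFun + Complex.I • T.domain.subtype) := htop ▸ Submodule.mem_top
    obtain ⟨x, hx⟩ := this
    exact ⟨x, hx⟩
  have hT₀v : ∀ (y : T₀.domain) (h : (y : H) ∈ T.domain), T ⟨y, h⟩ = T₀ y := by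
    intro y h
    exact (hT₀T.2 (x := y) (y := ⟨y, h⟩) rfl).symm
  have hT₁v : ∀ (y : T.domain) (h : (y : H) ∈ T₀.adjoint.domain),
      T₀.adjoint ⟨y, h⟩ = T y := by
    intro y h
    exact (hTT₁.2 (x := y) (y := ⟨y, h⟩) rfl).symm
  let S : T.domain →ₗ[ℂ] H := T.toFun + Complex.I • T.domain.subtype
  have hS : ∀ x, S x = T x + Complex.I • (x : H) := fun _ => rfl
  have hker : ∀ x : T.domain, S x ∈ R₀ ↔ (x : H) ∈ T₀.domain := by
    intro x
    constructor
    · rintro ⟨y, hy⟩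
      have hyT : (y : H) ∈ T.domain := hT₀T.1 y.2
      have hy' : S ⟨y, hyT⟩ = S x := by
        rw [← hy, hS, hT₀v]; rfl
      have h0 : x - ⟨y, hyT⟩ = 0 := by
        apply hinj
        rw [← hS, map_sub, hy', sub_self]
      rw [sub_eq_zero] at h0
      rw [h0]; exact y.2
    · intro h
      refine ⟨⟨x, h⟩, ?_⟩
      rw [hS]
      have := hT₀v ⟨x, h⟩ x.2
      change T₀ ⟨x, h⟩ + _ = _
      rw [← this]; rfl
  let b : Module.Basis (Fin (defIndex T₀.adjoint)) ℂ (R₀ᗮ : Submodule ℂ H) :=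
    (Module.finBasis ℂ (defSpace T₀.adjoint Complex.I)).map e
  choose s hs using fun j => hsurj (b j : H)
  let t : Fin (defIndex T₀.adjoint) → T₀.adjoint.domain := fun j => ⟨s j, hTT₁.1 (s j).2⟩
  have hcomb : ∀ α : Fin (defIndex T₀.adjoint) → ℂ,
      S (∑ j, α j • s j) = ((∑ j, α j • b j : (R₀ᗮ : Submodule ℂ H)) : H) := by
    intro α
    rw [map_sum]
    simp only [map_smul]
    simp only [hS, hs, Submodule.coe_sum, Submodule.coe_smul]
  have hsymT : ∀ x y : T.domain,
      sympForm T₀.adjoint ⟨x, hTT₁.1 x.2⟩ ⟨y, hTT₁.1 y.2⟩ = 0 := by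
    intro x y
    rw [sympForm, hT₁v, hT₁v, sub_eq_zero]
    exact hTs x y
  refine ⟨t, ⟨?_, fun i j => hsymT (s i) (s j)⟩, ?_⟩
  · intro α hα
    have h1 : ((∑ j, α j • s j : T.domain) : H) ∈ T₀.domain := by
      simpa [t] using hα
    have h2 := (hker _).2 h1
    rw [hcomb] at h2
    have h3 : (∑ j, α j • b j : (R₀ᗮ : Submodule ℂ H)) = 0 := by
      apply Subtype.ext
      have := Submodule.inner_right_of_mem_orthogonal h2
        (∑ j, α j • b j : (R₀ᗮ : Submodule ℂ H)).2
      exact inner_self_eq_zero.1 this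
    exact Fintype.linearIndependent_iff.1 b.linearIndependent α h3
  · ext x
    constructor
    · intro hx
      exact ⟨⟨x, hTT₁.1 hx⟩, fun j => hsymT ⟨x, hx⟩ (s j), rfl⟩
    · rintro ⟨x, hx, rfl⟩
      have hx' : ∀ j, ⟪T₀.adjoint x, (s j : H)⟫ = ⟪(x : H), T (s j)⟫ := by
        intro j
        have := hx j
        rw [sympForm, hT₁v, sub_eq_zero] at this
        exact this
      change (x : H) ∈ T.domain
      rw [← hTsa]
      refine LinearPMap.mem_adjoint_domain_of_exists _ ⟨T₀.adjoint x, fun y => ?_⟩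
      -- decompose `y`
      let p : (R₀ᗮ : Submodule ℂ H) := R₀ᗮ.orthogonalProjectionOnto (S y)
      let z : T.domain := ∑ j, b.repr p j • s j
      have hz : S z = p := by
        rw [hcomb, b.sum_repr]
      have hyz : ((y - z : T.domain) : H) ∈ T₀.domain := by
        rw [← hker, map_sub, hz]
        have := Submodule.sub_starProjection_mem_orthogonal (K := R₀ᗮ) (S y)
        rwa [Submodule.orthogonal_orthogonal] at this
      have h1 := LinearPMap.adjoint_isFormalAdjoint hdense x ⟨_, hyz⟩
      rw [← hT₀v ⟨_, hyz⟩ (y - z).2] at h1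
      have h1' : ⟪T₀.adjoint x, ((y - z : T.domain) : H)⟫ = ⟪(x : H), T (y - z)⟫ := h1
      have h2 : ⟪T₀.adjoint x, (z : H)⟫ = ⟪(x : H), T z⟫ := by
        have hTz : T z = ∑ j, b.repr p j • T (s j) := by
          change T.toFun z = ∑ j, b.repr p j • T.toFun (s j)
          simp only [z, map_sum, map_smul]
        rw [hTz]
        simp only [z, Submodule.coe_sum, Submodule.coe_smul, inner_sum, inner_smul_right, hx']
      rw [LinearPMap.map_sub, Submodule.coe_sub, inner_sub_right, inner_sub_right, h2] at h1'
      exact sub_left_injective h1'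
end
end

section
/- The minimal operator T̂₀ is a closed, densely defined, symmetric operator in the Hilbert space H⊕W. -/
open scoped ComplexInnerProductSpace

noncomputable section

variable {H : Type*} [NormedAddCommGroup H] [InnerProductSpace ℂ H] [CompleteSpace H]

variable {W : Type*} [NormedAddCommGroup W] [InnerProductSpace ℂ W] [FiniteDimensional ℂ W]

/-- The map `Ω : D(T₁) → W`, `Ωx := ∑ⱼ [x,tⱼ]_H ξⱼ`. -/
def Omega (T₁ : H →ₗ.[ℂ] H) {n : ℕ} (ξ : OrthonormalBasis (Fin n) ℂ W)
    (t : Fin n → T₁.domain) (x : T₁.domain) : W :=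
  ∑ j, sympForm T₁ x (t j) • ξ j

/-- The symplectic form on `D(T̂₁) = D(T₁) × W`:
`[(x,a),(y,b)]_{H⊕W} := [x,y]_H - ⟪Ωx, b⟫_W + ⟪a, Ωy⟫_W`. -/
def sympFormHW (T₁ : H →ₗ.[ℂ] H) {n : ℕ} (ξ : OrthonormalBasis (Fin n) ℂ W)
    (t : Fin n → T₁.domain) (x : T₁.domain) (a : W) (y : T₁.domain) (b : W) : ℂ :=
  sympForm T₁ x y - ⟪Omega T₁ ξ t x, b⟫ + ⟪a, Omega T₁ ξ t y⟫

/-!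
STATEMENT 12: the minimal operator `T̂₀` (with domain `{(x, Ψx) : x ∈ Δ₀}` and
`T̂₀(x, Ψx) = (T₁x, BΨx)`, characterized here through its graph) is a closed,
densely defined, symmetric operator in `H ⊕ W = WithLp 2 (H × W)`.
-/
theorem minimal_operator_in_HW_closed_densely_defined_symmetric
    (T₀ T₁ : H →ₗ.[ℂ] H)
    (hdense : Dense (T₀.domain : Set H))
    (hsymm : T₀.IsFormalAdjoint T₀)
    (hclosed : T₀.IsClosed)
    (hT₁ : T₁ = T₀.adjoint)
    (hT₁adj : T₁.adjoint = T₀)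
    (hle : T₀ ≤ T₁)
    [FiniteDimensional ℂ (defSpace T₁ Complex.I)]
    [FiniteDimensional ℂ (defSpace T₁ (-Complex.I))]
    (hpos : 1 ≤ defIndex T₁)
    (heq : Module.finrank ℂ (defSpace T₁ Complex.I)
         = Module.finrank ℂ (defSpace T₁ (-Complex.I)))
    {n : ℕ} (hn : n = Module.finrank ℂ W) (hn1 : 1 ≤ n) (hnd : n ≤ defIndex T₁)
    (ξ : OrthonormalBasis (Fin n) ℂ W)
    (B : W →ₗ[ℂ] W) (hB : B.IsSymmetric)
    (t : Fin n → T₁.domain) (ht : IsGKNFamily T₀ T₁ t)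
    (That0 : WithLp 2 (H × W) →ₗ.[ℂ] WithLp 2 (H × W))
    (hThat0 : ∀ z w : WithLp 2 (H × W), (z, w) ∈ That0.graph ↔
      ∃ (x₀ : T₀.domain) (α : Fin n → ℂ),
        z = (WithLp.equiv 2 (H × W)).symm
              ((x₀ : H) + ∑ j, α j • (t j : H), ∑ j, α j • ξ j) ∧
        w = (WithLp.equiv 2 (H × W)).symm
              (T₁ ((⟨(x₀ : H), hle.1 x₀.2⟩ : T₁.domain) + ∑ j, α j • t j),
                B (∑ j, α j • ξ j)))
    :
    Dense (That0.domain : Set (WithLp 2 (H × W))) ∧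
    That0.IsClosed ∧
    That0.IsFormalAdjoint That0 := by
  have hadj : ∀ (u : T₁.domain) (v : T₀.domain), ⟪T₁ u, (v : H)⟫ = ⟪(u : H), T₀ v⟫ := by
    subst hT₁
    exact LinearPMap.adjoint_isFormalAdjoint hdense
  have h01 : ∀ v : T₀.domain, T₁ ⟨(v : H), hle.1 v.2⟩ = T₀ v := fun v =>
    (hle.2 (x := v) (y := ⟨(v : H), hle.1 v.2⟩) rfl).symm
  have hval : ∀ α : Fin n → ℂ,
      ((∑ j, α j • t j : T₁.domain) : H) = ∑ j, α j • (t j : H) := by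
    intro α; simp
  have hsum : ∀ α : Fin n → ℂ, T₁ (∑ j, α j • t j) = ∑ j, α j • T₁ (t j) := by
    intro α
    change T₁.toFun _ = ∑ j, α j • T₁.toFun (t j)
    simp only [map_sum, map_smul]
  have htt : ∀ α β : Fin n → ℂ, ⟪T₁ (∑ j, α j • t j), ∑ j, β j • (t j : H)⟫
      = ⟪∑ j, α j • (t j : H), T₁ (∑ j, β j • t j)⟫ := by
    intro α β
    rw [hsum, hsum]
    simp only [sum_inner, inner_sum, inner_smul_left, inner_smul_right]
    have h2 : ∀ i j, ⟪T₁ (t i), (t j : H)⟫ = ⟪(t i : H), T₁ (t j)⟫ := fun i j =>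
      sub_eq_zero.1 (ht.2 i j)
    simp only [h2]
  refine ⟨?_, ?_, ?_⟩
  · rw [Submodule.dense_iff_topologicalClosure_eq_top, Submodule.topologicalClosure_eq_top_iff,
      Submodule.eq_bot_iff]
    intro z hz
    rw [Submodule.mem_orthogonal] at hz
    have key : ∀ (x₀ : T₀.domain) (α : Fin n → ℂ),
        ⟪(x₀ : H) + ∑ j, α j • (t j : H), z.fst⟫ + ⟪∑ j, α j • ξ j, z.snd⟫ = 0 := by
      intro x₀ α
      have hg := (hThat0 _ _).2 ⟨x₀, α, rfl, rfl⟩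
      have := hz _ (LinearPMap.mem_domain_of_mem_graph hg)
      exact this
    have h1 : z.fst = 0 := by
      apply hdense.eq_zero_of_inner_right ℂ
      intro v hv
      simpa using key ⟨v, hv⟩ 0
    have h2 : z.snd = 0 := by
      apply InnerProductSpace.ext_inner_left_basis ξ.toBasis
      intro i
      have := key 0 (Pi.single i 1)
      simpa [h1, Pi.single_apply] using this
    apply (WithLp.equiv 2 (H × W)).injective
    exact Prod.ext h1 h2
  · let F : WithLp 2 (H × W) →L[ℂ] H := WithLp.fstL 2 ℂ H W
    let S : WithLp 2 (H × W) →L[ℂ] W := WithLp.sndL 2 ℂ H W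
    let L := F.prodMap F
    let K := S.prodMap S
    let M : Submodule ℂ (WithLp 2 (H × W) × WithLp 2 (H × W)) :=
      T₀.graph.comap L.toLinearMap ⊓ LinearMap.ker K.toLinearMap
    let v : Fin n → WithLp 2 (H × W) × WithLp 2 (H × W) := fun j =>
      (WithLp.toLp 2 ((t j : H), ξ j), WithLp.toLp 2 (T₁ (t j), B (ξ j)))
    have hM : IsClosed (M : Set (WithLp 2 (H × W) × WithLp 2 (H × W))) := by
      have e : (M : Set (WithLp 2 (H × W) × WithLp 2 (H × W)))
          = (L ⁻¹' (T₀.graph : Set (H × H))) ∩ (K ⁻¹' {0}) := by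
        ext p; simp [M]
      rw [e]
      exact (IsClosed.preimage L.continuous hclosed).inter
        (isClosed_singleton.preimage K.continuous)
    have hvsum : ∀ α : Fin n → ℂ, ∑ j, α j • v j =
        (WithLp.toLp 2 (∑ j, α j • (t j : H), ∑ j, α j • ξ j),
         WithLp.toLp 2 (T₁ (∑ j, α j • t j), B (∑ j, α j • ξ j))) := by
      intro α
      rw [hsum]
      have hp : ∀ (f : Fin n → H) (g : Fin n → W),
          WithLp.toLp 2 (∑ j, α j • f j, ∑ j, α j • g j)
          = ∑ j, α j • WithLp.toLp 2 (f j, g j) := by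
        intro f g
        simp only [← WithLp.toLp_smul, ← WithLp.toLp_sum, Prod.smul_mk]
        exact congrArg (WithLp.toLp 2) (Prod.ext (by simp [Prod.fst_sum]) (by simp [Prod.snd_sum]))
      rw [map_sum]
      simp only [map_smul]
      rw [hp, hp]
      refine Prod.ext ?_ ?_
      · rw [Prod.fst_sum]; rfl
      · rw [Prod.snd_sum]; rfl
    have hG : That0.graph = M ⊔ Submodule.span ℂ (Set.range v) := by
      ext ⟨z, w⟩
      rw [hThat0, Submodule.mem_sup]
      constructor
      · rintro ⟨x₀, α, rfl, rfl⟩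
        refine ⟨(WithLp.toLp 2 ((x₀ : H), 0), WithLp.toLp 2 (T₀ x₀, 0)), ?_, ∑ j, α j • v j,
          (Submodule.mem_span_range_iff_exists_fun ℂ).2 ⟨α, rfl⟩, ?_⟩
        · refine ⟨?_, ?_⟩
          · exact T₀.mem_graph x₀
          · rfl
        · rw [hvsum, LinearPMap.map_add, h01, Prod.mk_add_mk, ← WithLp.toLp_add,
            ← WithLp.toLp_add, Prod.mk_add_mk, Prod.mk_add_mk, zero_add, zero_add]
          rfl
      · rintro ⟨⟨p, q⟩, ⟨hg, hk⟩, y, hy, hpy⟩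
        obtain ⟨α, rfl⟩ := (Submodule.mem_span_range_iff_exists_fun ℂ).1 hy
        obtain ⟨x₀, hx1, hx2⟩ := T₀.mem_graph_iff.1 hg
        have hk1 : p.snd = 0 := congrArg Prod.fst hk
        have hk2 : q.snd = 0 := congrArg Prod.snd hk
        have hp : p = WithLp.toLp 2 ((x₀ : H), 0) := by
          apply (WithLp.equiv 2 (H × W)).injective
          exact Prod.ext hx1.symm hk1
        have hq : q = WithLp.toLp 2 (T₀ x₀, 0) := by
          apply (WithLp.equiv 2 (H × W)).injective
          exact Prod.ext hx2.symm hk2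
        refine ⟨x₀, α, ?_⟩
        rw [hvsum, hp, hq, Prod.mk_add_mk, ← WithLp.toLp_add,
            ← WithLp.toLp_add, Prod.mk_add_mk, Prod.mk_add_mk, zero_add, zero_add] at hpy
        rw [LinearPMap.map_add, h01]
        exact ⟨(congrArg Prod.fst hpy).symm, (congrArg Prod.snd hpy).symm⟩
    have : FiniteDimensional ℂ (Submodule.span ℂ (Set.range v)) :=
      FiniteDimensional.span_of_finite ℂ (Set.finite_range v)
    unfold LinearPMap.IsClosed
    rw [hG]
    exact Submodule.isClosed_sup_finiteDimensional _ _ hM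
  · intro x y
    obtain ⟨x₀, α, hx, hTx⟩ := (hThat0 _ _).1 (That0.mem_graph x)
    obtain ⟨y₀, β, hy, hTy⟩ := (hThat0 _ _).1 (That0.mem_graph y)
    rw [hx, hy, hTx, hTy, LinearPMap.map_add, LinearPMap.map_add, h01, h01]
    simp only [WithLp.prod_inner_apply, WithLp.equiv_symm_apply]
    have hB' := hB (∑ j, α j • ξ j) (∑ j, β j • ξ j)
    have e1 := hsymm x₀ y₀
    have e2 := htt α β
    have e3 := hadj (∑ j, α j • t j) y₀
    have e4 : ⟪T₀ x₀, ∑ j, β j • (t j : H)⟫ = ⟪(x₀ : H), T₁ (∑ j, β j • t j)⟫ := by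
      have := hadj (∑ j, β j • t j) x₀
      rw [← inner_conj_symm, ← inner_conj_symm (x₀ : H), this, hval]
    rw [hval] at e3
    simp only [inner_add_left, inner_add_right]
    rw [hB', e1, e2, e3, e4]
end
end
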